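/- Let A be a unital C*-algebra, n,m ≥ 1, q ∈ ℂ with |q| < 1, and let s_1,…,s_n, t_1,…,t_m ∈ A satisfy the E_{n,m}^q-relations. With c = (1−Q) + (1−|q|²)^{−1/2} Q and t̂_r = (1−Q) t_r c, the topological closure of the *-subalgebra of A generated by {s_1,…,s_n, t̂_1,…,t̂_m} equals the topological closure of the *-subalgebra of A generated by {s_1,…,s_n, t_1,…,t_m}. -/

import Mathlib

open scoped BigOperators

/-!
Put `Φ x = ∑ i, s i * x * star (s i)`. The relation `star (s j) * t = q • (t * star (s j))` gives
`Q * t = q • Φ t`, so `t` is a fixed point of `f y = (1 - Q) * t + q • Φ y`. As a bounded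
multiplicative star-preserving map between C⋆-rings, `Φ` is contractive, hence `f` is
`‖q‖`-Lipschitz. It preserves the star subalgebra generated by the `s i` and `(1 - Q) * t`, and
iterating it from a point of that subalgebra yields approximations to `t`. The factor `c` does not
change this subalgebra, since it is invertible in the star subalgebra generated by the `s i`.
-/

open Set Function Filter Topology

theorem mem_closure_of_isFixedPt_of_mapsTo {X : Type*} [PseudoMetricSpace X] {K : NNReal}
    {f : X → X} {S : Set X} {x : X} (hf : LipschitzWith K f) (hK : K < 1) (hS : S.Nonempty)
    (hfS : MapsTo f S S) (hx : IsFixedPt f x) : x ∈ closure S := by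
  obtain ⟨y, hy⟩ := hS
  have dist_iterate_le (k : ℕ) : dist (f^[k] y) x ≤ (K : ℝ) ^ k * dist y x := by
    simpa [(hx.iterate k).eq] using (hf.iterate k).dist_le_mul y x
  have tendsto_bound : Tendsto (fun k : ℕ ↦ (K : ℝ) ^ k * dist y x) atTop (𝓝 0) := by
    simpa using (tendsto_pow_atTop_nhds_zero_of_lt_one K.coe_nonneg hK).mul_const (dist y x)
  exact mem_closure_of_tendsto
    (tendsto_iff_dist_tendsto_zero.2 <|
      squeeze_zero (fun _ ↦ dist_nonneg) dist_iterate_le tendsto_bound)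
    (Eventually.of_forall fun k ↦ hfS.iterate k hy)

theorem norm_map_le_of_bound {A B : Type*} [NonUnitalNormedRing A] [StarRing A] [CStarRing A]
    [NonUnitalNormedRing B] [StarRing B] [CStarRing B] (φ : A →⋆ₙ+* B) {C : ℝ}
    (hφ : ∀ x, ‖φ x‖ ≤ C * ‖x‖) (x : A) : ‖φ x‖ ≤ ‖x‖ := by
  let ψ : NormedAddGroupHom A B := AddMonoidHom.mkNormedAddGroupHom (φ : A →+ B) C hφ
  have norm_sq_le (y : A) : ‖ψ y‖ ^ 2 ≤ ‖ψ‖ * ‖y‖ ^ 2 :=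
    calc ‖ψ y‖ ^ 2 = ‖ψ (star y * y)‖ := by
          change ‖φ y‖ ^ 2 = ‖φ (star y * y)‖
          rw [map_mul, map_star, CStarRing.norm_star_mul_self, sq]
      _ ≤ ‖ψ‖ * ‖star y * y‖ := ψ.le_opNorm _
      _ = ‖ψ‖ * ‖y‖ ^ 2 := by rw [CStarRing.norm_star_mul_self, sq]
  have opNorm_le_sqrt : ‖ψ‖ ≤ √‖ψ‖ := ψ.opNorm_le_bound (Real.sqrt_nonneg _) fun y ↦ by
    rw [← Real.sqrt_sq (norm_nonneg y), ← Real.sqrt_mul (norm_nonneg ψ)]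
    exact Real.le_sqrt_of_sq_le (norm_sq_le y)
  have opNorm_le_one : ‖ψ‖ ≤ 1 := by
    nlinarith [Real.sq_sqrt (norm_nonneg ψ), norm_nonneg ψ]
  exact (ψ.le_of_opNorm_le opNorm_le_one x).trans_eq (one_mul _)

theorem one_sub_add_smul_mul_one_sub_add_smul {R A : Type*} [CommSemiring R] [Ring A]
    [Algebra R A] {p : A} (hp : IsIdempotentElem p) (a b : R) :
    (1 - p + a • p) * (1 - p + b • p) = 1 - p + (a * b) • p := by
  simp only [mul_add, add_mul, smul_mul_assoc, mul_smul_comm, hp.one_sub.eq, hp.eq,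
    hp.one_sub_mul_self, hp.mul_one_sub_self, smul_zero, add_zero, zero_add, smul_smul,
    mul_comm b a]

section Adjoin

variable {R A κ : Type*} [CommSemiring R] [StarRing R] [Semiring A] [StarRing A] [Algebra R A]
  [StarModule R A] {S : Set A} {d e : A}

theorem adjoin_union_range_mul_right_le (u : κ → A) (hd : d ∈ StarAlgebra.adjoin R S) :
    StarAlgebra.adjoin R (S ∪ range fun r ↦ u r * d) ≤ StarAlgebra.adjoin R (S ∪ range u) := by
  have hS : StarAlgebra.adjoin R S ≤ StarAlgebra.adjoin R (S ∪ range u) :=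
    StarAlgebra.adjoin_mono subset_union_left
  refine StarAlgebra.adjoin_le (union_subset (fun x hx ↦ ?_) ?_)
  · exact StarAlgebra.subset_adjoin R _ (.inl hx)
  · rintro _ ⟨r, rfl⟩
    exact mul_mem (StarAlgebra.subset_adjoin R _ (.inr ⟨r, rfl⟩)) (hS hd)

theorem adjoin_union_range_mul_right_eq (u : κ → A) (hd : d ∈ StarAlgebra.adjoin R S)
    (he : e ∈ StarAlgebra.adjoin R S) (hde : d * e = 1) :
    StarAlgebra.adjoin R (S ∪ range fun r ↦ u r * d) = StarAlgebra.adjoin R (S ∪ range u) := by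
  refine (adjoin_union_range_mul_right_le u hd).antisymm ?_
  simpa only [mul_assoc, hde, mul_one] using
    adjoin_union_range_mul_right_le (fun r ↦ u r * d) he

end Adjoin

/-- A Toeplitz–Cuntz family: isometries whose ranges are pairwise orthogonal. The ranges are not
required to add up to `1`. -/
def IsToeplitzCuntzFamily {A ι : Type*} [DecidableEq ι] [Semiring A] [StarRing A]
    (s : ι → A) : Prop :=
  ∀ i j, star (s i) * s j = if i = j then 1 else 0

/-- The sum `Q` of the range projections of the isometries `s i`. -/
def sumRangeProj {A ι : Type*} [Fintype ι] [Semiring A] [StarRing A] (s : ι → A) : A :=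
  ∑ i, s i * star (s i)

theorem sumRangeProj_mem {A ι σ : Type*} [Fintype ι] [Semiring A] [StarRing A] [SetLike σ A]
    [SubsemiringClass σ A] [StarMemClass σ A] {B : σ} {s : ι → A} (hsB : ∀ i, s i ∈ B) :
    sumRangeProj s ∈ B :=
  sum_mem fun i _ ↦ mul_mem (hsB i) (star_mem (hsB i))

namespace IsToeplitzCuntzFamily

section Algebraic

variable {A ι : Type*} [Fintype ι] [DecidableEq ι] [Semiring A] [StarRing A] {s : ι → A}

theorem sum_conj_mul_sum_conj (hs : IsToeplitzCuntzFamily s) (x y : A) :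
    (∑ i, s i * x * star (s i)) * ∑ i, s i * y * star (s i) =
      ∑ i, s i * (x * y) * star (s i) := by
  have conj_mul_conj (i j : ι) : s i * x * star (s i) * (s j * y * star (s j)) =
      if i = j then s i * (x * y) * star (s i) else 0 := by
    calc s i * x * star (s i) * (s j * y * star (s j))
        = s i * x * (star (s i) * s j) * y * star (s j) := by simp only [mul_assoc]
      _ = if i = j then s i * (x * y) * star (s i) else 0 := by
        rw [hs i j]
        split_ifs with hij
        · simp only [hij, mul_one, mul_assoc]
        · simp only [mul_zero, zero_mul]
  simp only [Finset.sum_mul_sum, conj_mul_conj, Finset.sum_ite_eq, Finset.mem_univ, if_true]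

/-- The canonical endomorphism `Φ x = ∑ i, s i * x * star (s i)` of a Toeplitz–Cuntz family. It is
bundled as a non-unital homomorphism because `Φ 1` is the projection `Q`. -/
def canonicalEndomorphism (hs : IsToeplitzCuntzFamily s) : A →⋆ₙ+* A where
  toFun x := ∑ i, s i * x * star (s i)
  map_mul' x y := (hs.sum_conj_mul_sum_conj x y).symm
  map_zero' := by simp
  map_add' x y := by simp only [mul_add, add_mul, Finset.sum_add_distrib]
  map_star' x := by simp only [star_sum, star_mul, star_star, mul_assoc]

theorem canonicalEndomorphism_apply (hs : IsToeplitzCuntzFamily s) (x : A) :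
    hs.canonicalEndomorphism x = ∑ i, s i * x * star (s i) :=
  rfl

theorem canonicalEndomorphism_one (hs : IsToeplitzCuntzFamily s) :
    hs.canonicalEndomorphism 1 = sumRangeProj s := by
  simp only [canonicalEndomorphism_apply, mul_one, sumRangeProj]

theorem isIdempotentElem_sumRangeProj (hs : IsToeplitzCuntzFamily s) :
    IsIdempotentElem (sumRangeProj s) :=
  hs.canonicalEndomorphism_one ▸ IsIdempotentElem.one.map hs.canonicalEndomorphism

theorem canonicalEndomorphism_mem {σ : Type*} [SetLike σ A] [SubsemiringClass σ A]
    [StarMemClass σ A] {B : σ} {x : A} (hs : IsToeplitzCuntzFamily s) (hsB : ∀ i, s i ∈ B)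
    (hx : x ∈ B) : hs.canonicalEndomorphism x ∈ B :=
  sum_mem fun i _ ↦ mul_mem (mul_mem (hsB i) hx) (star_mem (hsB i))

theorem sumRangeProj_mul {R : Type*} [Monoid R] [DistribMulAction R A] [SMulCommClass R A A]
    (hs : IsToeplitzCuntzFamily s) {q : R} {t : A}
    (ht : ∀ j, star (s j) * t = q • (t * star (s j))) :
    sumRangeProj s * t = q • hs.canonicalEndomorphism t := by
  simp only [sumRangeProj, canonicalEndomorphism_apply, Finset.sum_mul, mul_assoc, ht,
    mul_smul_comm, Finset.smul_sum]

end Algebraic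

section Normed

variable {A ι : Type*} [Fintype ι] [DecidableEq ι] [NormedRing A] [StarRing A] [CStarRing A]
  {s : ι → A}

theorem norm_canonicalEndomorphism_le (hs : IsToeplitzCuntzFamily s) (x : A) :
    ‖hs.canonicalEndomorphism x‖ ≤ ‖x‖ := by
  refine norm_map_le_of_bound hs.canonicalEndomorphism (C := ∑ i, ‖s i‖ * ‖star (s i)‖)
    (fun y ↦ ?_) x
  rw [canonicalEndomorphism_apply, Finset.sum_mul]
  refine norm_sum_le_of_le _ fun i _ ↦ ?_
  calc ‖s i * y * star (s i)‖ ≤ ‖s i‖ * ‖y‖ * ‖star (s i)‖ := norm_mul₃_le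
    _ = ‖s i‖ * ‖star (s i)‖ * ‖y‖ := mul_right_comm _ _ _

variable {𝕜 : Type*} [NormedField 𝕜] [NormedAlgebra 𝕜 A]

theorem lipschitzWith_add_smul_canonicalEndomorphism (hs : IsToeplitzCuntzFamily s) (x : A)
    (q : 𝕜) : LipschitzWith ‖q‖₊ fun y ↦ x + q • hs.canonicalEndomorphism y :=
  LipschitzWith.of_dist_le_mul fun y z ↦ by
    rw [dist_add_left, dist_eq_norm, ← smul_sub, ← map_sub, norm_smul, dist_eq_norm, coe_nnnorm]
    gcongr
    exact hs.norm_canonicalEndomorphism_le (y - z)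

variable [StarRing 𝕜] [StarModule 𝕜 A] {q : 𝕜}

theorem mem_topologicalClosure_of_one_sub_mul_mem (hs : IsToeplitzCuntzFamily s) (hq : ‖q‖ < 1)
    {t : A} (ht : ∀ j, star (s j) * t = q • (t * star (s j))) {B : StarSubalgebra 𝕜 A}
    (hsB : ∀ i, s i ∈ B) (htB : (1 - sumRangeProj s) * t ∈ B) : t ∈ B.topologicalClosure := by
  have fixed : (1 - sumRangeProj s) * t + q • hs.canonicalEndomorphism t = t := by
    rw [← hs.sumRangeProj_mul ht, sub_mul, one_mul, sub_add_cancel]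
  exact mem_closure_of_isFixedPt_of_mapsTo
    (hs.lipschitzWith_add_smul_canonicalEndomorphism ((1 - sumRangeProj s) * t) q) hq
    ⟨0, zero_mem B⟩
    (fun _ hy ↦ add_mem htB (B.smul_mem (hs.canonicalEndomorphism_mem hsB hy) q)) fixed

theorem topologicalClosure_adjoin_one_sub_mul {κ : Type*} (hs : IsToeplitzCuntzFamily s)
    (hq : ‖q‖ < 1) {t : κ → A} (hst : ∀ j r, star (s j) * t r = q • (t r * star (s j))) :
    (StarAlgebra.adjoin 𝕜
      (range s ∪ range fun r ↦ (1 - sumRangeProj s) * t r)).topologicalClosure =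
      (StarAlgebra.adjoin 𝕜 (range s ∪ range t)).topologicalClosure := by
  have mem_left (u : κ → A) (i : ι) : s i ∈ StarAlgebra.adjoin 𝕜 (range s ∪ range u) :=
    StarAlgebra.subset_adjoin 𝕜 _ (.inl ⟨i, rfl⟩)
  have mem_right (u : κ → A) (r : κ) : u r ∈ StarAlgebra.adjoin 𝕜 (range s ∪ range u) :=
    StarAlgebra.subset_adjoin 𝕜 _ (.inr ⟨r, rfl⟩)
  apply le_antisymm
  · apply StarSubalgebra.topologicalClosure_mono
    refine StarAlgebra.adjoin_le (union_subset ?_ ?_)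
    · exact range_subset_iff.2 (mem_left t)
    · exact range_subset_iff.2 fun r ↦
        mul_mem (sub_mem (one_mem _) (sumRangeProj_mem (mem_left t))) (mem_right t r)
  · refine StarSubalgebra.topologicalClosure_minimal
      (StarAlgebra.adjoin_le (union_subset ?_ ?_)) (StarSubalgebra.isClosed_topologicalClosure _)
    · exact range_subset_iff.2 fun i ↦ StarSubalgebra.le_topologicalClosure _ (mem_left _ i)
    · exact range_subset_iff.2 fun r ↦ hs.mem_topologicalClosure_of_one_sub_mul_mem hq
        (fun j ↦ hst j r) (mem_left _) (mem_right _ r)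

end Normed

section Scaling

variable {𝕜 A ι κ : Type*} [Fintype ι] [DecidableEq ι] [Field 𝕜] [StarRing 𝕜] [Ring A]
  [StarRing A] [Algebra 𝕜 A] [StarModule 𝕜 A] {s : ι → A}

theorem adjoin_mul_one_sub_add_smul (hs : IsToeplitzCuntzFamily s) (u : κ → A) {a : 𝕜}
    (ha : a ≠ 0) :
    StarAlgebra.adjoin 𝕜
      (range s ∪ range fun r ↦ u r * (1 - sumRangeProj s + a • sumRangeProj s)) =
      StarAlgebra.adjoin 𝕜 (range s ∪ range u) := by
  have hQ : sumRangeProj s ∈ StarAlgebra.adjoin 𝕜 (range s) :=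
    sumRangeProj_mem fun i ↦ StarAlgebra.subset_adjoin 𝕜 _ ⟨i, rfl⟩
  have scaling_mem (b : 𝕜) :
      1 - sumRangeProj s + b • sumRangeProj s ∈ StarAlgebra.adjoin 𝕜 (range s) :=
    add_mem (sub_mem (one_mem _) hQ) (StarSubalgebra.smul_mem _ hQ b)
  refine adjoin_union_range_mul_right_eq u (scaling_mem a) (scaling_mem a⁻¹) ?_
  rw [one_sub_add_smul_mul_one_sub_add_smul hs.isIdempotentElem_sumRangeProj,
    mul_inv_cancel₀ ha, one_smul, sub_add_cancel]

end Scaling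

end IsToeplitzCuntzFamily

theorem stmt_6_general {𝕜 A ι κ : Type*} [NormedField 𝕜] [StarRing 𝕜] [NormedRing A]
    [StarRing A] [CStarRing A] [NormedAlgebra 𝕜 A] [StarModule 𝕜 A] [Fintype ι] [DecidableEq ι]
    {s : ι → A} (hs : IsToeplitzCuntzFamily s) {t : κ → A} {q : 𝕜} (hq : ‖q‖ < 1)
    (hst : ∀ j r, star (s j) * t r = q • (t r * star (s j))) {a : 𝕜} (ha : a ≠ 0) :
    (StarAlgebra.adjoin 𝕜 (range s ∪ range fun r ↦
      (1 - sumRangeProj s) * t r *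
        (1 - sumRangeProj s + a • sumRangeProj s))).topologicalClosure =
      (StarAlgebra.adjoin 𝕜 (range s ∪ range t)).topologicalClosure := by
  rw [hs.adjoin_mul_one_sub_add_smul _ ha, hs.topologicalClosure_adjoin_one_sub_mul hq hst]

theorem stmt_6 {A : Type*} [NormedRing A] [StarRing A] [CStarRing A]
    [NormedAlgebra ℂ A] [StarModule ℂ A] [CompleteSpace A]
    {n m : ℕ} (hn : 1 ≤ n) (hm : 1 ≤ m) (q : ℂ) (hq : ‖q‖ < 1)
    (s : Fin n → A) (t : Fin m → A)
    (hs : ∀ i j : Fin n, star (s i) * s j = if i = j then 1 else 0)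
    (ht : ∀ r l : Fin m, star (t r) * t l = if r = l then 1 else 0)
    (hst : ∀ (j : Fin n) (r : Fin m), star (s j) * t r = q • (t r * star (s j)))
    (Q : A) (hQ : Q = ∑ i : Fin n, s i * star (s i))
    (c : A) (hc : c = (1 - Q) + (((Real.sqrt (1 - ‖q‖ ^ 2))⁻¹ : ℝ) : ℂ) • Q)
    (th : Fin m → A) (hth : ∀ r, th r = (1 - Q) * t r * c) :
    (StarAlgebra.adjoin ℂ (Set.range s ∪ Set.range th)).topologicalClosure
      = (StarAlgebra.adjoin ℂ (Set.range s ∪ Set.range t)).topologicalClosure := by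
  have scale_pos : 0 < (√(1 - ‖q‖ ^ 2))⁻¹ :=
    inv_pos.2 <| Real.sqrt_pos.2 <| sub_pos.2 <| pow_lt_one₀ (norm_nonneg q) hq two_ne_zero
  obtain rfl : th = fun r ↦ (1 - Q) * t r * c := funext hth
  subst hc hQ
  exact stmt_6_general hs hq hst (Complex.ofReal_ne_zero.2 scale_pos.ne')
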